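/- Let 0 < α < 0.15 and let L > 0 satisfy (α + L) e^{4L} ≤ Γ(1+α)² / (π Γ(1−2α)), where Γ is the gamma function. Let N ≥ 2 be an integer with log(N + 1 + α) + 1/(2N − 1) ≤ (1 − γ) + L/α, where γ is the Euler–Mascheroni constant. Then for every set of α-perturbed nodes x̃_{−N},…,x̃_N, all weights of the unique quadrature rule exact on T_N at these nodes are nonnegative. -/

import Mathlib

open Real Finset

/-- `q` is a trigonometric polynomial of degree ≤ N. -/
def IsTrigPoly (N : ℕ) (q : ℝ → ℂ) : Prop :=
  ∃ c : ℤ → ℂ, ∀ x : ℝ,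
    q x = ∑ k ∈ Finset.Icc (-(N:ℤ)) (N:ℤ), c k * Complex.exp (Complex.I * (k : ℂ) * (x : ℂ))

/-- `x` is a set of α-perturbed nodes of size 2N+1. -/
def PerturbedNodes (N : ℕ) (α : ℝ) (x : ℤ → ℝ) : Prop :=
  ∀ j ∈ Finset.Icc (-(N:ℤ)) (N:ℤ),
    |x j - (j : ℝ) * (2*π/(2*N+1))| ≤ α * (2*π/(2*N+1))

/-- The weights `w` form a quadrature rule at the nodes `x` that is exact on `T_N`. -/
def ExactQuad (N : ℕ) (x : ℤ → ℝ) (w : ℤ → ℝ) : Prop :=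
  ∀ q : ℝ → ℂ, IsTrigPoly N q →
    ∑ j ∈ Finset.Icc (-(N:ℤ)) (N:ℤ), (w j : ℂ) * q (x j) = ∫ t in (-π)..π, q t

/-!
Consider the `j`-th weight, and number the nodes cyclically starting from the `j`-th one. The
product `P` of the sines vanishing at the other `2N` nodes is a trigonometric polynomial of degree
`N`, and it is positive at the `j`-th node. Exactness for `P` of the perturbed rule and of the
equispaced rule gives `w j * P (x j) = h * ∑ P (y p)` with `y p = (j + p) h` the equispaced points,
so it suffices that `P (y 0)` dominates the sum of the other `|P (y p)|`. Each ratio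
`|P (y p)| / P (y 0)` is bounded by taking all perturbations to be `± α`. Replacing sines by their
arguments then turns it into a product whose limit is a quotient of gamma values, with growth
governed by harmonic numbers.
-/

/-! ### Gamma function and harmonic number estimates -/

lemma Gamma_midpoint_sq_le {s t : ℝ} (hs : 0 < s) (ht : 0 < t) :
    Gamma ((s + t) / 2) ^ 2 ≤ Gamma s * Gamma t := by
  have hst : 0 < Gamma s * Gamma t := mul_pos (Gamma_pos_of_pos hs) (Gamma_pos_of_pos ht)
  have hmid : Gamma ((s + t) / 2) ≤ √(Gamma s * Gamma t) := by
    have h := Gamma_mul_add_mul_le_rpow_Gamma_mul_rpow_Gamma hs ht one_half_pos one_half_pos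
      (add_halves 1)
    rwa [← mul_rpow (Gamma_pos_of_pos hs).le (Gamma_pos_of_pos ht).le, ← sqrt_eq_rpow, ← mul_add,
      one_div_mul_eq_div] at h
  calc Gamma ((s + t) / 2) ^ 2 ≤ √(Gamma s * Gamma t) ^ 2 := by gcongr
    _ = Gamma s * Gamma t := sq_sqrt hst.le

lemma harmonic_le_log_add_eulerMascheroni (n : ℕ) :
    (harmonic n : ℝ) ≤ log (n + 1) + eulerMascheroniConstant := by
  have h := eulerMascheroniSeq_lt_eulerMascheroniConstant n
  rw [eulerMascheroniSeq] at h
  linarith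

lemma monotone_harmonic : Monotone harmonic :=
  monotone_nat_of_le_succ fun n => by
    rw [harmonic_succ]
    exact le_add_of_nonneg_right (by positivity)

/-- The product `∏ (i + α) / (i - α)` over `1 ≤ i < m`, which is
`Γ(1 - α) Γ(m + α) / (Γ(1 + α) Γ(m - α))`. It dominates the analogous product of sines
`sinShiftRatio`. -/
noncomputable def shiftRatio (α : ℝ) (m : ℕ) : ℝ :=
  ∏ i ∈ Ico 1 m, ((i : ℝ) + α) / (i - α)

section ShiftRatio

variable {α : ℝ}

lemma shiftRatio_succ {m : ℕ} (hm : 1 ≤ m) :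
    shiftRatio α (m + 1) = shiftRatio α m * ((m + α) / (m - α)) :=
  prod_Ico_succ_top hm _

lemma shiftRatio_nonneg (hα : |α| ≤ 1) (m : ℕ) : 0 ≤ shiftRatio α m := by
  obtain ⟨h₁, h₂⟩ := abs_le.1 hα
  refine prod_nonneg fun i hi => ?_
  have hi1 : (1 : ℝ) ≤ i := by exact_mod_cast (mem_Ico.1 hi).1
  exact div_nonneg (by linarith) (by linarith)

lemma monotone_shiftRatio_mul_exp (hα0 : 0 ≤ α) (hα : α < 1) :
    Monotone fun m : ℕ => shiftRatio α (m + 1) * exp (-(2 * α * harmonic m)) := by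
  refine monotone_nat_of_le_succ fun m => ?_
  have hm : (0 : ℝ) < m + 1 - α := by linarith [Nat.cast_nonneg (α := ℝ) m]
  have hfactor : exp (2 * α / (m + 1)) ≤ (m + 1 + α) / (m + 1 - α) := by
    have hlt : 2 * α / (m + 1) < 2 := by rw [div_lt_iff₀ (by positivity)]; linarith
    refine (exp_le_two_add_div_two_sub (by positivity) hlt).trans_eq ?_
    have : 2 - 2 * α / (m + 1) ≠ 0 := by linarith
    rw [div_eq_div_iff this hm.ne']
    field_simp
  have hP := shiftRatio_nonneg (abs_le.2 ⟨by linarith, hα.le⟩) (m + 1)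
  calc shiftRatio α (m + 1) * exp (-(2 * α * harmonic m))
      = shiftRatio α (m + 1) * exp (2 * α / (m + 1)) * exp (-(2 * α * harmonic (m + 1))) := by
        rw [mul_assoc (shiftRatio _ _), ← exp_add, harmonic_succ]
        congr 2
        push_cast
        ring
    _ ≤ shiftRatio α (m + 1) * ((m + 1 + α) / (m + 1 - α)) *
          exp (-(2 * α * harmonic (m + 1))) := by gcongr
    _ = _ := by rw [shiftRatio_succ (by omega : 1 ≤ m + 1)]; push_cast; rfl

lemma shiftRatio_eq_GammaSeq_div (hα : |α| < 1) {n : ℕ} (hn : n ≠ 0) :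
    shiftRatio α (n + 2) =
      GammaSeq (1 - α) n / GammaSeq (1 + α) n * exp (2 * α * log n) := by
  obtain ⟨h₁, h₂⟩ := abs_lt.1 hα
  have hn0 : (0 : ℝ) < n := by positivity
  have hprod : shiftRatio α (n + 2) =
      (∏ j ∈ range (n + 1), (1 + α + j)) / ∏ j ∈ range (n + 1), (1 - α + j) := by
    rw [shiftRatio, prod_Ico_eq_prod_range, ← prod_div_distrib]
    refine prod_congr rfl fun j _ => ?_
    push_cast
    congr 1 <;> ring
  have hexp : exp (2 * α * log n) = (n : ℝ) ^ (1 + α) / (n : ℝ) ^ (1 - α) := by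
    rw [← rpow_sub hn0, rpow_def_of_pos hn0]
    congr 1
    ring
  have hplus : ∏ j ∈ range (n + 1), (1 + α + j) ≠ 0 := prod_ne_zero_iff.2 fun j _ => by
    linarith [Nat.cast_nonneg (α := ℝ) j]
  have hminus : ∏ j ∈ range (n + 1), (1 - α + j) ≠ 0 := prod_ne_zero_iff.2 fun j _ => by
    linarith [Nat.cast_nonneg (α := ℝ) j]
  rw [hprod, hexp, GammaSeq, GammaSeq]
  field_simp

open Filter Topology in
lemma tendsto_shiftRatio_mul_exp (hα : |α| < 1) :
    Tendsto (fun m : ℕ => shiftRatio α (m + 1) * exp (-(2 * α * harmonic m))) atTop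
      (𝓝 (Gamma (1 - α) / Gamma (1 + α) * exp (-(2 * α * eulerMascheroniConstant)))) := by
  have hG : Gamma (1 + α) ≠ 0 := (Gamma_pos_of_pos (by linarith [(abs_lt.1 hα).1])).ne'
  have hγ : Tendsto (fun n : ℕ => (harmonic (n + 1) : ℝ) - log n) atTop
      (𝓝 eulerMascheroniConstant) := by
    have h := tendsto_harmonic_sub_log.add (tendsto_one_div_add_atTop_nhds_zero_nat (𝕜 := ℝ))
    rw [add_zero] at h
    refine h.congr fun n => ?_
    rw [harmonic_succ]
    push_cast
    ring
  rw [← tendsto_add_atTop_iff_nat 1]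
  refine (((GammaSeq_tendsto_Gamma (1 - α)).div (GammaSeq_tendsto_Gamma (1 + α)) hG).mul
    (hγ.const_mul (2 * α)).neg.rexp).congr' ?_
  filter_upwards [eventually_ne_atTop 0] with n hn
  rw [shiftRatio_eq_GammaSeq_div hα hn, mul_assoc (_ / _), ← exp_add, Pi.div_apply]
  congr 2
  ring

lemma shiftRatio_le_Gamma (hα0 : 0 ≤ α) (hα : α < 1) (m : ℕ) :
    shiftRatio α (m + 1) ≤ Gamma (1 - α) / Gamma (1 + α) *
      exp (2 * α * (harmonic m - eulerMascheroniConstant)) := by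
  have h := (monotone_shiftRatio_mul_exp hα0 hα).ge_of_tendsto
    (tendsto_shiftRatio_mul_exp (abs_lt.2 ⟨by linarith, hα⟩)) m
  rw [exp_neg, ← div_eq_mul_inv, div_le_iff₀ (exp_pos _), mul_assoc, ← exp_add] at h
  refine h.trans_eq ?_
  congr 2
  ring

lemma shiftRatio_sq_le_Gamma (hα0 : 0 ≤ α) (hα : α < 1 / 2) (m : ℕ) :
    shiftRatio α (m + 1) ^ 2 ≤ Gamma (1 - 2 * α) / Gamma (1 + α) ^ 2 *
      exp (4 * α * (harmonic m - eulerMascheroniConstant)) := by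
  have hP := shiftRatio_nonneg (abs_le.2 ⟨by linarith, by linarith⟩) (m + 1)
  have hG : Gamma (1 - α) ^ 2 ≤ Gamma (1 - 2 * α) := by
    have h := Gamma_midpoint_sq_le (s := 1 - 2 * α) (by linarith) one_pos
    rw [Gamma_one, mul_one] at h
    convert h using 3
    ring
  calc shiftRatio α (m + 1) ^ 2
      ≤ (Gamma (1 - α) / Gamma (1 + α) *
          exp (2 * α * (harmonic m - eulerMascheroniConstant))) ^ 2 := by
        gcongr
        exact shiftRatio_le_Gamma hα0 (by linarith) m
    _ = Gamma (1 - α) ^ 2 / Gamma (1 + α) ^ 2 *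
          exp (4 * α * (harmonic m - eulerMascheroniConstant)) := by
        rw [mul_pow, div_pow, ← exp_nat_mul]
        congr 2
        push_cast
        ring
    _ ≤ _ := by gcongr

end ShiftRatio

section HarmonicSum

variable {α : ℝ}

lemma mul_harmonic_le {L : ℝ} (hα : 0 < α) {N : ℕ}
    (hN : log (N + 1) ≤ 1 - eulerMascheroniConstant + L / α) : α * harmonic N ≤ α + L := by
  calc α * harmonic N ≤ α * (1 + L / α) := by
        gcongr
        linarith [harmonic_le_log_add_eulerMascheroni N]
    _ = α + L := by field_simp

lemma exp_div_add_exp_div_le (hα0 : 0 ≤ α) (hα : α ≤ 0.15) :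
    exp (4 * α) / (1 + α) + exp (4 * α * (3 / 2)) / (2 + α) ≤ 3 / 2 * exp (4 * α) := by
  have hexp : exp (2 * α) ≤ (1 + α) / (1 - α) := by
    refine (exp_le_two_add_div_two_sub (by linarith) (by linarith)).trans_eq ?_
    rw [div_eq_div_iff (by linarith) (by linarith)]
    ring
  have hrat : 1 / (1 + α) + (1 + α) / (1 - α) / (2 + α) ≤ 3 / 2 := by
    have : 0 < 1 - α := by linarith
    rw [div_div, div_add_div _ _ (by positivity) (by positivity),
      div_le_div_iff₀ (by positivity) (by positivity)]
    nlinarith [mul_nonneg hα0 hα0, mul_nonneg hα0 (mul_nonneg hα0 hα0)]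
  calc exp (4 * α) / (1 + α) + exp (4 * α * (3 / 2)) / (2 + α)
      = (1 / (1 + α) + exp (2 * α) / (2 + α)) * exp (4 * α) := by
        rw [show 4 * α * (3 / 2) = 2 * α + 4 * α by ring, exp_add]
        ring
    _ ≤ (1 / (1 + α) + (1 + α) / (1 - α) / (2 + α)) * exp (4 * α) := by gcongr
    _ ≤ 3 / 2 * exp (4 * α) := by gcongr

lemma exp_mul_half_add_le {H u : ℝ} (hα0 : 0 ≤ α) (hα : α ≤ 0.15) (hH : 3 / 2 ≤ H)
    (hu : u ≤ 1 / 3) : exp (4 * α * (1 / 2 + u)) ≤ 1 + 4 * α * H := by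
  have hquad : exp (10 * α / 3) ≤ 1 + 10 * α / 3 + (10 * α / 3) ^ 2 := by
    have h := abs_exp_sub_one_sub_id_le (x := 10 * α / 3)
      (by rw [abs_of_nonneg (by positivity)]; linarith)
    linarith [(abs_le.1 h).2]
  calc exp (4 * α * (1 / 2 + u)) ≤ exp (10 * α / 3) := exp_le_exp.2 (by nlinarith)
    _ ≤ 1 + 10 * α / 3 + (10 * α / 3) ^ 2 := hquad
    _ ≤ 1 + 4 * α * H := by nlinarith

lemma mul_exp_add_mul_exp_le {H u : ℝ} (hα0 : 0 ≤ α) (hα : α ≤ 0.15) (hH : 3 / 2 ≤ H)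
    (hu0 : 0 ≤ u) (hu : u ≤ 1 / 3) :
    H * exp (4 * α * (H - 1 / 2)) + u * exp (4 * α * (H + u)) ≤
      (H + u) * exp (4 * α * (H + u - 1 / 2)) := by
  set E := exp (4 * α * (H - 1 / 2))
  have hlast : exp (4 * α * (H + u)) ≤ E * (1 + 4 * α * H) := by
    rw [show 4 * α * (H + u) = 4 * α * (H - 1 / 2) + 4 * α * (1 / 2 + u) by ring, exp_add]
    gcongr
    exact exp_mul_half_add_le hα0 hα hH hu
  have htotal : E * (1 + 4 * α * u) ≤ exp (4 * α * (H + u - 1 / 2)) := by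
    rw [show 4 * α * (H + u - 1 / 2) = 4 * α * (H - 1 / 2) + 4 * α * u by ring, exp_add]
    gcongr
    linarith [add_one_le_exp (4 * α * u)]
  calc H * E + u * exp (4 * α * (H + u)) ≤ H * E + u * (E * (1 + 4 * α * H)) := by gcongr
    _ ≤ (H + u) * (E * (1 + 4 * α * u)) := by
        have : 0 ≤ u * u * α * E := by positivity
        linarith
    _ ≤ (H + u) * exp (4 * α * (H + u - 1 / 2)) := by gcongr

-- The saving of `1 / 2` in the exponent is needed later: `1 / 2 + γ > 1`.
lemma sum_exp_harmonic_div_le (hα0 : 0 ≤ α) (hα : α ≤ 0.15) {N : ℕ} (hN : 2 ≤ N) :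
    ∑ m ∈ Ico 1 (N + 1), exp (4 * α * harmonic m) / (m + α) ≤
      harmonic N * exp (4 * α * (harmonic N - 1 / 2)) := by
  have hH2 : harmonic 2 = 3 / 2 := by norm_num [harmonic, sum_range_succ]
  induction N, hN using Nat.le_induction with
  | base =>
    have hH1 : harmonic 1 = 1 := by norm_num [harmonic]
    have h := exp_div_add_exp_div_le hα0 hα
    norm_num [sum_Ico_succ_top, hH1, hH2] at h ⊢
    exact h
  | succ N hN ih =>
    have hH : (3 / 2 : ℝ) ≤ harmonic N := by
      have h : (harmonic 2 : ℝ) ≤ harmonic N := Rat.cast_le.2 (monotone_harmonic hN)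
      rw [hH2] at h
      push_cast at h
      exact h
    have hu : ((N : ℝ) + 1)⁻¹ ≤ 1 / 3 := by
      have : (2 : ℝ) ≤ N := by exact_mod_cast hN
      rw [inv_eq_one_div]
      exact one_div_le_one_div_of_le (by norm_num) (by linarith)
    have hterm : exp (4 * α * (harmonic N + ((N : ℝ) + 1)⁻¹)) / (N + 1 + α) ≤
        ((N : ℝ) + 1)⁻¹ * exp (4 * α * (harmonic N + ((N : ℝ) + 1)⁻¹)) := by
      rw [inv_mul_eq_div]
      exact div_le_div_of_nonneg_left (exp_pos _).le (by positivity) (by linarith)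
    have hstep := mul_exp_add_mul_exp_le hα0 hα hH (by positivity) hu
    rw [sum_Ico_succ_top (by omega), harmonic_succ]
    push_cast
    linarith

lemma pi_mul_sum_shiftRatio_sq_le (hα0 : 0 ≤ α) (hα : α ≤ 0.15) {N : ℕ} (hN : 2 ≤ N) :
    π * ∑ m ∈ Ico 1 (N + 1), α / (m + α) * shiftRatio α (m + 1) ^ 2 ≤
      π * Gamma (1 - 2 * α) / Gamma (1 + α) ^ 2 *
        (α * harmonic N * exp (4 * (α * harmonic N - α))) := by
  set γ := eulerMascheroniConstant
  set C := Gamma (1 - 2 * α) / Gamma (1 + α) ^ 2 with hC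
  have hC0 : 0 < C :=
    div_pos (Gamma_pos_of_pos (by linarith)) (pow_pos (Gamma_pos_of_pos (by linarith)) 2)
  have hH0 : (0 : ℝ) ≤ harmonic N := by exact_mod_cast (harmonic_pos (by omega)).le
  calc π * ∑ m ∈ Ico 1 (N + 1), α / (m + α) * shiftRatio α (m + 1) ^ 2
      ≤ π * ∑ m ∈ Ico 1 (N + 1), α / (m + α) * (C * exp (4 * α * (harmonic m - γ))) := by
        gcongr with m
        exact shiftRatio_sq_le_Gamma hα0 (by linarith) m
    _ = π * C * (α * exp (-(4 * α * γ))) *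
          ∑ m ∈ Ico 1 (N + 1), exp (4 * α * harmonic m) / (m + α) := by
        simp only [mul_sum]
        refine sum_congr rfl fun m _ => ?_
        rw [mul_sub, sub_eq_add_neg, exp_add]
        ring
    _ ≤ π * C * (α * exp (-(4 * α * γ))) *
          (harmonic N * exp (4 * α * (harmonic N - 1 / 2))) := by
        gcongr
        exact sum_exp_harmonic_div_le hα0 hα hN
    _ = π * C * (α * harmonic N * exp (4 * α * (harmonic N - 1 / 2 - γ))) := by
        rw [mul_sub _ _ γ, sub_eq_add_neg _ (4 * α * γ), exp_add]
        ring
    _ ≤ π * C * (α * harmonic N * exp (4 * (α * harmonic N - α))) := by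
        have hγ : 1 / 2 < γ := one_half_lt_eulerMascheroniConstant
        refine mul_le_mul_of_nonneg_left (mul_le_mul_of_nonneg_left ?_ (by positivity))
          (by positivity)
        exact exp_le_exp.2 (by nlinarith)
    _ = _ := by rw [hC, mul_div_assoc]

lemma pi_mul_sum_shiftRatio_sq_le_one (hα0 : 0 ≤ α) (hα : α ≤ 0.15) {N : ℕ} (hN : 2 ≤ N) {L : ℝ}
    (hH : α * harmonic N ≤ α + L)
    (hL : (α + L) * exp (4 * L) ≤ Gamma (1 + α) ^ 2 / (π * Gamma (1 - 2 * α))) :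
    π * ∑ m ∈ Ico 1 (N + 1), α / (m + α) * shiftRatio α (m + 1) ^ 2 ≤ 1 := by
  have hminus : 0 < Gamma (1 - 2 * α) := Gamma_pos_of_pos (by linarith)
  have hH0 : (0 : ℝ) ≤ harmonic N := by exact_mod_cast (harmonic_pos (by omega)).le
  calc π * ∑ m ∈ Ico 1 (N + 1), α / (m + α) * shiftRatio α (m + 1) ^ 2
      ≤ π * Gamma (1 - 2 * α) / Gamma (1 + α) ^ 2 *
          (α * harmonic N * exp (4 * (α * harmonic N - α))) :=
        pi_mul_sum_shiftRatio_sq_le hα0 hα hN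
    _ ≤ π * Gamma (1 - 2 * α) / Gamma (1 + α) ^ 2 * ((α + L) * exp (4 * L)) := by
        have hexp : exp (4 * (α * harmonic N - α)) ≤ exp (4 * L) := exp_le_exp.2 (by linarith)
        have : 0 ≤ α * harmonic N := by positivity
        have := this.trans hH
        gcongr
    _ ≤ π * Gamma (1 - 2 * α) / Gamma (1 + α) ^ 2 *
          (Gamma (1 + α) ^ 2 / (π * Gamma (1 - 2 * α))) := by gcongr
    _ = 1 := by field_simp

end HarmonicSum

/-! ### Products of sines -/

lemma mul_sin_le_mul_sin {x y : ℝ} (hx : 0 ≤ x) (hxy : x ≤ y) (hy : y ≤ π) :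
    x * sin y ≤ y * sin x := by
  rcases hx.eq_or_lt with rfl | hx0
  · simp
  rcases hxy.eq_or_lt with rfl | hlt
  · rfl
  have h := strictConcaveOn_sin_Icc.secant_strict_mono (Set.left_mem_Icc.2 pi_pos.le)
    ⟨hx, hxy.trans hy⟩ ⟨hx.trans hxy, hy⟩ hx0.ne' (hx0.trans hlt).ne' hlt
  simp only [sin_zero, sub_zero] at h
  rw [div_lt_div_iff₀ (hx0.trans hlt) hx0] at h
  linarith

/-- The sine of half the angle `2πt/n`. The mesh of `n` equispaced nodes on the circle is the unit
of length, so that these nodes are the integers and perturbations are measured relative to it. -/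
noncomputable def nodeSin (n t : ℝ) : ℝ := sin (π * t / n)

section NodeSin

variable {n a b s t α δ : ℝ}

lemma nodeSin_neg (n t : ℝ) : nodeSin n (-t) = -nodeSin n t := by
  rw [nodeSin, mul_neg, neg_div, sin_neg, nodeSin]

lemma nodeSin_self_sub (hn : n ≠ 0) (t : ℝ) : nodeSin n (n - t) = nodeSin n t := by
  rw [nodeSin, mul_sub, sub_div, mul_div_cancel_right₀ _ hn, sin_pi_sub, nodeSin]

lemma nodeSin_nonneg (h0 : 0 ≤ t) (hn : t ≤ n) : 0 ≤ nodeSin n t := by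
  refine sin_nonneg_of_nonneg_of_le_pi (by have := h0.trans hn; positivity) ?_
  rw [mul_div_assoc]
  exact mul_le_of_le_one_right pi_pos.le (div_le_one_of_le₀ hn (h0.trans hn))

lemma nodeSin_pos (h0 : 0 < t) (hn : t < n) : 0 < nodeSin n t := by
  refine sin_pos_of_pos_of_lt_pi (by have := h0.trans hn; positivity) ?_
  rw [mul_div_assoc]
  exact mul_lt_of_lt_one_right pi_pos ((div_lt_one (h0.trans hn)).2 hn)

lemma nodeSin_natCast_add_pos {n i : ℕ} (ht : |t| < 1) (hi : i ∈ Ico 1 n) :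
    0 < nodeSin n (i + t) := by
  obtain ⟨h₁, h₂⟩ := abs_lt.1 ht
  have hi1 : (1 : ℝ) ≤ i := by exact_mod_cast (mem_Ico.1 hi).1
  have hin : (i : ℝ) + 1 ≤ n := by exact_mod_cast (mem_Ico.1 hi).2
  exact nodeSin_pos (by linarith) (by linarith)

lemma nodeSin_le_nodeSin (ha : 0 ≤ a) (hab : a ≤ b) (h : a + b ≤ n) :
    nodeSin n a ≤ nodeSin n b := by
  rcases (add_nonneg ha (ha.trans hab)).trans h |>.eq_or_lt with rfl | hn
  · simp [nodeSin]
  rw [← sub_nonneg, nodeSin, nodeSin, sin_sub_sin]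
  have hsum : π * b / n + π * a / n ≤ π := by
    rw [← add_div, ← mul_add, div_le_iff₀ hn]
    exact mul_le_mul_of_nonneg_left (by linarith) pi_pos.le
  have hle : π * a / n ≤ π * b / n := by gcongr
  have hnonneg : 0 ≤ π * a / n := by positivity
  exact mul_nonneg
    (mul_nonneg two_pos.le (sin_nonneg_of_nonneg_of_le_pi (by linarith) (by linarith)))
    (cos_nonneg_of_neg_pi_div_two_le_of_le (by linarith) (by linarith))

lemma abs_nodeSin_of_abs_le (h : |δ| ≤ n) : |nodeSin n δ| = nodeSin n |δ| := by
  rw [← abs_of_nonneg (nodeSin_nonneg (abs_nonneg δ) h)]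
  rcases abs_choice δ with hδ | hδ <;> rw [hδ]
  rw [nodeSin_neg, abs_neg]

lemma nodeSin_mul_sub_mul (n a b α δ : ℝ) :
    nodeSin n (a + α) * nodeSin n (b + δ) - nodeSin n (a - δ) * nodeSin n (b - α) =
      nodeSin n (a + b) * nodeSin n (α + δ) := by
  simp only [nodeSin, mul_add, mul_sub, add_div, sub_div, sin_add, sin_sub]
  ring

lemma abs_nodeSin_sub_div_le (hδ : |δ| ≤ α) (ha : α < a) (hb : α < b) (hab : a + b ≤ n) :
    |nodeSin n (a - δ)| / |nodeSin n (b + δ)| ≤ nodeSin n (a + α) / nodeSin n (b - α) := by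
  obtain ⟨hδ₁, hδ₂⟩ := abs_le.1 hδ
  have h₁ : 0 < nodeSin n (a - δ) := nodeSin_pos (by linarith) (by linarith)
  have h₂ : 0 < nodeSin n (b + δ) := nodeSin_pos (by linarith) (by linarith)
  have h₃ : 0 < nodeSin n (b - α) := nodeSin_pos (by linarith) (by linarith)
  rw [abs_of_pos h₁, abs_of_pos h₂, div_le_div_iff₀ h₂ h₃, ← sub_nonneg, nodeSin_mul_sub_mul]
  exact mul_nonneg (nodeSin_nonneg (by linarith) hab) (nodeSin_nonneg (by linarith) (by linarith))

lemma abs_nodeSin_div_le (hδ : |δ| ≤ α) (ht : α < t) (htn : 2 * t ≤ n) :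
    |nodeSin n δ| / |nodeSin n (t + δ)| ≤ nodeSin n α / nodeSin n (t - α) := by
  obtain ⟨hδ₁, hδ₂⟩ := abs_le.1 hδ
  have hα := (abs_nonneg δ).trans hδ
  have hpos : 0 < nodeSin n (t - α) := nodeSin_pos (by linarith) (by linarith)
  rw [abs_nodeSin_of_abs_le (by linarith)]
  exact div_le_div₀ (nodeSin_nonneg hα (by linarith))
    (nodeSin_le_nodeSin (abs_nonneg δ) hδ (by linarith)) hpos
    ((nodeSin_le_nodeSin (by linarith) (by linarith) (by linarith)).trans (le_abs_self _))

lemma nodeSin_div_nodeSin_le (hs : 0 < s) (hst : s ≤ t) (ht : t < n) :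
    nodeSin n t / nodeSin n s ≤ t / s := by
  have hn := (hs.trans_le hst).trans ht
  rw [div_le_div_iff₀ (nodeSin_pos hs (hst.trans_lt ht)) hs]
  refine le_of_mul_le_mul_left ?_ (div_pos pi_pos hn)
  calc π / n * (nodeSin n t * s) = π * s / n * sin (π * t / n) := by rw [nodeSin]; ring
    _ ≤ π * t / n * sin (π * s / n) := mul_sin_le_mul_sin (by positivity) (by gcongr)
        (by rw [div_le_iff₀ hn]; gcongr)
    _ = π / n * (t * nodeSin n s) := by rw [nodeSin]; ring

lemma nodeSin_div_nodeSin_le_pi_div_two_mul (hs : 0 ≤ s) (ht : 0 < t) (htn : 2 * t ≤ n) :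
    nodeSin n s / nodeSin n t ≤ π / 2 * (s / t) := by
  have hn : 0 < n := by linarith
  have hlower : 2 / π * (π * t / n) ≤ nodeSin n t :=
    mul_le_sin (by positivity) (by
      rw [mul_div_assoc, ← mul_one_div π 2]
      exact mul_le_mul_of_nonneg_left ((div_le_div_iff₀ hn two_pos).2 (by linarith)) pi_pos.le)
  calc nodeSin n s / nodeSin n t ≤ (π * s / n) / (2 / π * (π * t / n)) :=
        div_le_div₀ (by positivity) (sin_le (by positivity)) (by positivity) hlower
    _ = π / 2 * (s / t) := by field_simp

end NodeSin

/-- The product of `nodeSin n (i + α) / nodeSin n (i - α)` over `1 ≤ i < m`; it bounds the growth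
of a product of sines whose zeros are within `α` of the integers. -/
noncomputable def sinShiftRatio (n : ℕ) (α : ℝ) (m : ℕ) : ℝ :=
  ∏ i ∈ Ico 1 m, nodeSin n (i + α) / nodeSin n (i - α)

section SinShiftRatio

variable {n m p : ℕ} {α : ℝ}

lemma sinShiftRatio_succ (hm : 1 ≤ m) :
    sinShiftRatio n α (m + 1) =
      sinShiftRatio n α m * (nodeSin n (m + α) / nodeSin n (m - α)) :=
  prod_Ico_succ_top hm _

lemma sinShiftRatio_factor_pos (hα : |α| < 1) {i : ℕ} (hi : i ∈ Ico 1 n) :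
    0 < nodeSin n (i + α) / nodeSin n (i - α) := by
  rw [sub_eq_add_neg]
  exact div_pos (nodeSin_natCast_add_pos hα hi)
    (nodeSin_natCast_add_pos (by rwa [abs_neg]) hi)

lemma sinShiftRatio_pos (hα : |α| < 1) (hm : m ≤ n) : 0 < sinShiftRatio n α m :=
  prod_pos fun _ hi => sinShiftRatio_factor_pos hα (Ico_subset_Ico_right hm hi)

lemma sinShiftRatio_factor_sub {i : ℕ} (hi : i ≤ n) (hn : n ≠ 0) (α : ℝ) :
    nodeSin n (↑(n - i) + α) / nodeSin n (↑(n - i) - α) =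
      (nodeSin n (i + α) / nodeSin n (i - α))⁻¹ := by
  have hn' : (n : ℝ) ≠ 0 := Nat.cast_ne_zero.2 hn
  rw [Nat.cast_sub hi, inv_div, ← nodeSin_self_sub hn' (i + α), ← nodeSin_self_sub hn' (i - α)]
  congr 2 <;> ring

lemma sinShiftRatio_inv_eq_prod_Ico (hp : p < n) (α : ℝ) :
    (sinShiftRatio n α (n - p))⁻¹ =
      ∏ i ∈ Ico (p + 1) n, nodeSin n (i + α) / nodeSin n (i - α) := by
  have h := prod_Ico_reflect
    (fun i : ℕ => nodeSin n (i + α) / nodeSin n (i - α)) 1 (show n - p ≤ n + 1 by omega)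
  rw [show n + 1 - (n - p) = p + 1 by omega, Nat.add_sub_cancel] at h
  rw [← h, sinShiftRatio, ← prod_inv_distrib]
  refine prod_congr rfl fun i hi => (sinShiftRatio_factor_sub ?_ (by omega) α).symm
  have := mem_Ico.1 hi
  omega

lemma sinShiftRatio_self (hα : |α| < 1) : sinShiftRatio n α n = 1 := by
  rcases n.eq_zero_or_pos with rfl | hn
  · rfl
  have hpos := sinShiftRatio_pos hα (le_refl n)
  have hinv : (sinShiftRatio n α n)⁻¹ = sinShiftRatio n α n :=
    sinShiftRatio_inv_eq_prod_Ico hn α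
  rw [inv_eq_iff_eq_inv] at hinv
  have hsq := mul_inv_cancel₀ hpos.ne'
  rw [← hinv] at hsq
  nlinarith

lemma sinShiftRatio_self_sub (hα : |α| < 1) (hp : p < n) :
    sinShiftRatio n α (n - p) = sinShiftRatio n α (p + 1) := by
  have hsplit : sinShiftRatio n α (p + 1) * (sinShiftRatio n α (n - p))⁻¹ = 1 := by
    rw [sinShiftRatio_inv_eq_prod_Ico hp, ← sinShiftRatio_self (n := n) hα]
    exact prod_Ico_consecutive _ (by omega) (by omega)
  exact (eq_of_div_eq_one hsplit).symm

lemma sinShiftRatio_le_shiftRatio (hα0 : 0 ≤ α) (hα : α < 1) (hm : m ≤ n) :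
    sinShiftRatio n α m ≤ shiftRatio α m := by
  refine prod_le_prod (fun i hi => (sinShiftRatio_factor_pos ?_ ?_).le) fun i hi => ?_
  · exact abs_lt.2 ⟨by linarith, hα⟩
  · exact Ico_subset_Ico_right hm hi
  · have hi1 : (1 : ℝ) ≤ i := by exact_mod_cast (mem_Ico.1 hi).1
    have hin : (i : ℝ) + 1 ≤ n := by exact_mod_cast (mem_Ico.1 hi).2.trans_le hm
    exact nodeSin_div_nodeSin_le (by linarith) (by linarith) (by linarith)

end SinShiftRatio

/-- The value at `t` of the product of rescaled sines vanishing at `i + δ i` for `1 ≤ i < n`, that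
is, at all perturbed nodes of a period except the one numbered `0`. -/
noncomputable def nodeProd (n : ℕ) (δ : ℕ → ℝ) (t : ℝ) : ℝ :=
  ∏ i ∈ Ico 1 n, nodeSin n (t - i - δ i)

/-- The contribution of the `i`-th factor to the quotient `|nodeProd n δ p / nodeProd n δ 0|`. -/
noncomputable def nodeFactor (n : ℕ) (δ : ℕ → ℝ) (p i : ℕ) : ℝ :=
  |nodeSin n (p - i - δ i)| / |nodeSin n (i + δ i)|

section NodeProd

variable {n m p i : ℕ} {α : ℝ} {δ : ℕ → ℝ}

lemma nodeFactor_nonneg (n : ℕ) (δ : ℕ → ℝ) (p i : ℕ) : 0 ≤ nodeFactor n δ p i :=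
  div_nonneg (abs_nonneg _) (abs_nonneg _)

lemma nodeFactor_sub_sub (δ : ℕ → ℝ) (hp : p ≤ n) (hi : i ≤ n) (hn : n ≠ 0) :
    nodeFactor n (fun k => -δ (n - k)) (n - p) (n - i) = nodeFactor n δ p i := by
  have hn' : (n : ℝ) ≠ 0 := Nat.cast_ne_zero.2 hn
  rw [nodeFactor, nodeFactor, Nat.sub_sub_self hi, Nat.cast_sub hp, Nat.cast_sub hi,
    ← nodeSin_self_sub hn' (i + δ i), ← abs_neg (nodeSin n (p - i - δ i)), ← nodeSin_neg]
  congr 3 <;> ring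

lemma prod_nodeFactor_le (hδ : ∀ i, |δ i| ≤ α) (hα : α < 1) (hm : m ≤ n) :
    ∏ i ∈ Ico 1 m, nodeFactor n δ m i ≤ sinShiftRatio n α m := by
  calc ∏ i ∈ Ico 1 m, nodeFactor n δ m i
      ≤ ∏ i ∈ Ico 1 m, nodeSin n (↑(m - i) + α) / nodeSin n (i - α) := by
        refine prod_le_prod (fun i _ => nodeFactor_nonneg n δ m i) fun i hi => ?_
        obtain ⟨hi1, him⟩ := mem_Ico.1 hi
        have hi1' : (1 : ℝ) ≤ i := by exact_mod_cast hi1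
        have him' : (i : ℝ) + 1 ≤ m := by exact_mod_cast him
        have hmn : (m : ℝ) ≤ n := by exact_mod_cast hm
        rw [Nat.cast_sub him.le]
        exact abs_nodeSin_sub_div_le (hδ i) (by linarith) (by linarith) (by linarith)
    _ = sinShiftRatio n α m := by
        rw [sinShiftRatio, prod_div_distrib, prod_div_distrib,
          prod_Ico_reflect (fun k : ℕ => nodeSin n (k + α)) 1 m.le_succ, Nat.add_sub_cancel_left,
          Nat.add_sub_cancel]

lemma prod_nodeFactor_right_le (hδ : ∀ i, |δ i| ≤ α) (hα : α < 1) (hp : p < n) :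
    ∏ i ∈ Ico (p + 1) n, nodeFactor n δ p i ≤ sinShiftRatio n α (p + 1) := by
  have hα0 := (abs_nonneg (δ 0)).trans (hδ 0)
  have hreflect := prod_Ico_reflect (fun i => nodeFactor n (fun k => -δ (n - k)) (n - p) i) (p + 1)
    n.le_succ
  rw [Nat.add_sub_cancel_left, Nat.add_sub_add_right] at hreflect
  calc ∏ i ∈ Ico (p + 1) n, nodeFactor n δ p i
      = ∏ i ∈ Ico 1 (n - p), nodeFactor n (fun k => -δ (n - k)) (n - p) i := by
        rw [← hreflect]
        exact prod_congr rfl fun i hi =>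
          (nodeFactor_sub_sub δ hp.le (mem_Ico.1 hi).2.le (by omega)).symm
    _ ≤ sinShiftRatio n α (n - p) :=
        prod_nodeFactor_le (fun i => (abs_neg _).trans_le (hδ _)) hα (n.sub_le p)
    _ = sinShiftRatio n α (p + 1) :=
        sinShiftRatio_self_sub (by rwa [abs_of_nonneg hα0]) hp

lemma nodeFactor_self_le (hδ : ∀ i, |δ i| ≤ α) (hα : α < p) (hp : 2 * p ≤ n) :
    nodeFactor n δ p p ≤ nodeSin n α / nodeSin n (p - α) := by
  rw [nodeFactor, sub_self, zero_sub, nodeSin_neg, abs_neg]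
  exact abs_nodeSin_div_le (hδ p) hα (by exact_mod_cast hp)

lemma prod_Ico_nodeFactor_le (hδ : ∀ i, |δ i| ≤ α) (hα : α < 1) (hp0 : 1 ≤ p) (hp : 2 * p ≤ n) :
    ∏ i ∈ Ico 1 n, nodeFactor n δ p i ≤
      nodeSin n α / nodeSin n (p + α) * sinShiftRatio n α (p + 1) ^ 2 := by
  have hp0' : (1 : ℝ) ≤ p := by exact_mod_cast hp0
  have hpn : (2 : ℝ) * p ≤ n := by exact_mod_cast hp
  have hα0 := (abs_nonneg (δ 0)).trans (hδ 0)
  have hαabs : |α| < 1 := by rwa [abs_of_nonneg hα0]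
  have hplus : 0 < nodeSin n (p + α) := nodeSin_pos (by linarith) (by linarith)
  have hminus : 0 < nodeSin n (p - α) := nodeSin_pos (by linarith) (by linarith)
  calc ∏ i ∈ Ico 1 n, nodeFactor n δ p i
      = (∏ i ∈ Ico 1 p, nodeFactor n δ p i) * nodeFactor n δ p p *
          ∏ i ∈ Ico (p + 1) n, nodeFactor n δ p i := by
        rw [← prod_Ico_succ_top hp0, prod_Ico_consecutive _ (by omega) (by omega)]
    _ ≤ sinShiftRatio n α p * (nodeSin n α / nodeSin n (p - α)) *
          sinShiftRatio n α (p + 1) := by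
        have := nodeSin_nonneg (n := n) hα0 (by linarith)
        refine mul_le_mul (mul_le_mul (prod_nodeFactor_le hδ hα (by omega))
          (nodeFactor_self_le hδ (by linarith) hp) (nodeFactor_nonneg n δ p p)
          (sinShiftRatio_pos hαabs (by omega)).le) (prod_nodeFactor_right_le hδ hα (by omega))
          (prod_nonneg fun i _ => nodeFactor_nonneg n δ p i) ?_
        exact mul_nonneg (sinShiftRatio_pos hαabs (by omega)).le (by positivity)
    _ = nodeSin n α / nodeSin n (p + α) * sinShiftRatio n α (p + 1) ^ 2 := by
        rw [sinShiftRatio_succ hp0]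
        field_simp

lemma abs_nodeProd_natCast (hδ : ∀ i, |δ i| < 1) (p : ℕ) :
    |nodeProd n δ p| = (∏ i ∈ Ico 1 n, nodeFactor n δ p i) * |nodeProd n δ 0| := by
  rw [nodeProd, nodeProd, abs_prod, abs_prod, ← prod_mul_distrib]
  refine prod_congr rfl fun i hi => ?_
  have hpos := nodeSin_natCast_add_pos (hδ i) hi
  rw [nodeFactor, show (0 : ℝ) - i - δ i = -(i + δ i) by ring, nodeSin_neg, abs_neg,
    div_mul_cancel₀ _ (abs_pos.2 hpos.ne').ne']

lemma abs_nodeProd_neg_reflect_sub (n : ℕ) (δ : ℕ → ℝ) (t : ℝ) :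
    |nodeProd n (fun k => -δ (n - k)) (n - t)| = |nodeProd n δ t| := by
  have hreflect := prod_Ico_reflect (fun i : ℕ => |nodeSin n (n - t - i + δ (n - i))|) 1 n.le_succ
  rw [Nat.add_sub_cancel_left, Nat.add_sub_cancel] at hreflect
  rw [nodeProd, nodeProd, abs_prod, abs_prod]
  simp only [sub_neg_eq_add]
  rw [← hreflect]
  refine prod_congr rfl fun i hi => ?_
  have hi : i ≤ n := (mem_Ico.1 hi).2.le
  rw [Nat.sub_sub_self hi, Nat.cast_sub hi, ← abs_neg, ← nodeSin_neg]
  congr 2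
  ring

lemma abs_nodeProd_neg_reflect_zero (n : ℕ) (δ : ℕ → ℝ) :
    |nodeProd n (fun k => -δ (n - k)) 0| = |nodeProd n δ 0| := by
  rw [← sub_self (n : ℝ), abs_nodeProd_neg_reflect_sub, nodeProd, nodeProd, abs_prod, abs_prod]
  refine prod_congr rfl fun i hi => ?_
  have hn : (n : ℝ) ≠ 0 := Nat.cast_ne_zero.2 (by have := mem_Ico.1 hi; omega)
  rw [sub_sub, nodeSin_self_sub hn, sub_self, sub_sub, zero_sub, nodeSin_neg, abs_neg]

lemma nodeProd_pos {N : ℕ} (hδ : ∀ i, |δ i| ≤ α) (hα : α < 1 / 2) {t : ℝ} (ht : |t| ≤ α) :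
    0 < nodeProd (2 * N + 1) δ t := by
  have hneg : nodeProd (2 * N + 1) δ t =
      ∏ i ∈ Ico 1 (2 * N + 1), nodeSin (2 * N + 1 : ℕ) (i + δ i - t) := by
    have hcard : (-1 : ℝ) ^ #(Ico 1 (2 * N + 1)) = 1 := by simp
    rw [nodeProd, ← one_mul (∏ i ∈ _, nodeSin _ (_ + _ - _)), ← hcard, ← prod_const,
      ← prod_mul_distrib]
    refine prod_congr rfl fun i _ => ?_
    rw [neg_one_mul, ← nodeSin_neg]
    congr 1
    ring
  rw [hneg]
  refine prod_pos fun i hi => ?_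
  rw [add_sub_assoc]
  refine nodeSin_natCast_add_pos ?_ hi
  linarith [abs_sub (δ i) t, hδ i]

lemma abs_nodeProd_le {N : ℕ} (hδ : ∀ i, |δ i| ≤ α) (hα : α < 1 / 2) (hp0 : 1 ≤ p) (hp : p ≤ N) :
    |nodeProd (2 * N + 1) δ p| ≤
      π / 2 * (α / (p + α) * shiftRatio α (p + 1) ^ 2) * |nodeProd (2 * N + 1) δ 0| := by
  have hα0 := (abs_nonneg (δ 0)).trans (hδ 0)
  have hp0' : (0 : ℝ) < p := by exact_mod_cast hp0
  have hpN : (p : ℝ) ≤ N := by exact_mod_cast hp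
  rw [abs_nodeProd_natCast (fun i => (hδ i).trans_lt (by linarith)), ← mul_assoc (π / 2)]
  gcongr
  refine (prod_Ico_nodeFactor_le hδ (by linarith) hp0 (by omega)).trans ?_
  have hratio : nodeSin (2 * N + 1 : ℕ) α / nodeSin (2 * N + 1 : ℕ) (p + α) ≤
      π / 2 * (α / (p + α)) :=
    nodeSin_div_nodeSin_le_pi_div_two_mul hα0 (by linarith) (by push_cast; linarith)
  gcongr
  · exact (sinShiftRatio_pos (by rw [abs_of_nonneg hα0]; linarith) (by omega)).le
  · exact sinShiftRatio_le_shiftRatio hα0 (by linarith) (by omega)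

lemma sum_abs_nodeProd_le {N : ℕ} (hδ : ∀ i, |δ i| ≤ α) (hα : α < 1 / 2) :
    ∑ p ∈ Ico 1 (2 * N + 1), |nodeProd (2 * N + 1) δ p| ≤
      π * (∑ p ∈ Ico 1 (N + 1), α / (p + α) * shiftRatio α (p + 1) ^ 2) *
        |nodeProd (2 * N + 1) δ 0| := by
  set δ' : ℕ → ℝ := fun k => -δ (2 * N + 1 - k) with hδ'
  set b : ℕ → ℝ := fun p => α / (p + α) * shiftRatio α (p + 1) ^ 2
  have hreflect : ∑ p ∈ Ico (N + 1) (2 * N + 1), |nodeProd (2 * N + 1) δ p| =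
      ∑ p ∈ Ico 1 (N + 1), |nodeProd (2 * N + 1) δ' p| := by
    have h := sum_Ico_reflect (fun p => |nodeProd (2 * N + 1) δ' p|) (N + 1) (2 * N + 1).le_succ
    rw [Nat.add_sub_cancel_left, show 2 * N + 1 + 1 - (N + 1) = N + 1 by omega] at h
    rw [← h]
    refine sum_congr rfl fun p hp => ?_
    rw [Nat.cast_sub (mem_Ico.1 hp).2.le, hδ', abs_nodeProd_neg_reflect_sub]
  have hhalf : ∀ ε : ℕ → ℝ, (∀ i, |ε i| ≤ α) →
      ∑ p ∈ Ico 1 (N + 1), |nodeProd (2 * N + 1) ε p| ≤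
        π / 2 * (∑ p ∈ Ico 1 (N + 1), b p) * |nodeProd (2 * N + 1) ε 0| := fun ε hε => by
    rw [mul_sum, sum_mul]
    refine sum_le_sum fun p hp => ?_
    exact abs_nodeProd_le hε hα (mem_Ico.1 hp).1 (Nat.lt_succ_iff.1 (mem_Ico.1 hp).2)
  have hleft := hhalf δ hδ
  have hright := hhalf δ' fun i => (abs_neg _).trans_le (hδ _)
  rw [hδ', abs_nodeProd_neg_reflect_zero, ← hδ'] at hright
  rw [← sum_Ico_consecutive _ (show 1 ≤ N + 1 by omega) (by omega), hreflect]
  linarith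

end NodeProd

/-! ### Trigonometric polynomials and quadrature -/

lemma bmod_mem_Icc (N : ℕ) (k : ℤ) :
    k.bmod (2 * N + 1) ∈ Icc (-(N : ℤ)) (N : ℤ) := by
  have h₁ := Int.le_bmod (x := k) (m := 2 * N + 1) (by omega)
  have h₂ := Int.bmod_le (x := k) (m := 2 * N + 1) (by omega)
  rw [mem_Icc]
  push_cast at h₁ h₂
  omega

lemma bmod_eq_self_of_mem_Icc {N : ℕ} {k : ℤ} (hk : k ∈ Icc (-(N : ℤ)) (N : ℤ)) :
    k.bmod (2 * N + 1) = k := by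
  rw [mem_Icc] at hk
  exact Int.bmod_eq_of_le (by push_cast; omega) (by push_cast; omega)

lemma sum_Icc_neg_natCast_eq_sum_bmod {M : Type*} [AddCommMonoid M] (N : ℕ) (j : ℤ) (f : ℤ → M) :
    ∑ k ∈ Icc (-(N : ℤ)) (N : ℤ), f k =
      ∑ i ∈ range (2 * N + 1), f ((j + i).bmod (2 * N + 1)) := by
  have hinj : Set.InjOn (fun i : ℕ => (j + i).bmod (2 * N + 1)) (range (2 * N + 1)) := by
    intro a ha b hb hab
    have hmod : (j + a) % ((2 * N + 1 : ℕ) : ℤ) = (j + b) % ((2 * N + 1 : ℕ) : ℤ) := by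
      simpa only [Int.bmod_emod] using congrArg (· % ((2 * N + 1 : ℕ) : ℤ)) hab
    exact (Int.natCast_modEq_iff.1 (Int.ModEq.add_left_cancel' j hmod)).eq_of_lt_of_lt
      (mem_range.1 ha) (mem_range.1 hb)
  have hmaps : Set.MapsTo (fun i : ℕ => (j + i).bmod (2 * N + 1)) (range (2 * N + 1))
      (Icc (-(N : ℤ)) (N : ℤ)) := fun i _ => bmod_mem_Icc N _
  refine (sum_nbij _ hmaps hinj ?_ fun _ _ => rfl).symm
  refine surjOn_of_injOn_of_card_le _ hmaps hinj ?_
  rw [Int.card_Icc, card_range]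
  omega

lemma sum_Icc_neg_natCast_eq_sum_range {M : Type*} [AddCommMonoid M] (N : ℕ) (f : ℤ → M) :
    ∑ k ∈ Icc (-(N : ℤ)) (N : ℤ), f k = ∑ i ∈ range (2 * N + 1), f (i - N) := by
  rw [sum_Icc_neg_natCast_eq_sum_bmod N (-N)]
  refine sum_congr rfl fun i hi => ?_
  have := mem_range.1 hi
  rw [neg_add_eq_sub, bmod_eq_self_of_mem_Icc (mem_Icc.2 ⟨by omega, by omega⟩)]

lemma integral_exp_I_mul_intCast (k : ℤ) :
    ∫ t in (-π)..π, Complex.exp (Complex.I * k * t) = if k = 0 then (2 * π : ℂ) else 0 := by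
  split_ifs with hk
  · subst hk
    simp [two_mul]
  · have hperiod : Complex.exp (Complex.I * k * π) = Complex.exp (Complex.I * k * ↑(-π)) :=
      Complex.exp_eq_exp_iff_exists_int.2 ⟨k, by push_cast; ring⟩
    rw [integral_exp_mul_complex (mul_ne_zero Complex.I_ne_zero (Int.cast_ne_zero.2 hk)), hperiod,
      sub_self, zero_div]

lemma sum_exp_I_mul_equispaced {n : ℕ} (hn : n ≠ 0) {k : ℤ} (hk : ¬(n : ℤ) ∣ k) (a : ℝ) :
    ∑ m ∈ range n, Complex.exp (Complex.I * k * ↑(a + m * (2 * π / n))) = 0 := by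
  set ζ := Complex.exp (2 * π * Complex.I / n)
  have hζ : IsPrimitiveRoot ζ n := Complex.isPrimitiveRoot_exp n hn
  have hne : ζ ^ k ≠ 1 := fun h => hk ((hζ.zpow_eq_one_iff_dvd k).1 h)
  have hpow : (ζ ^ k) ^ n = 1 := by
    rw [← zpow_natCast, ← zpow_mul, mul_comm, zpow_mul, zpow_natCast, hζ.pow_eq_one, one_zpow]
  have hterm : ∀ m ∈ range n, Complex.exp (Complex.I * k * ↑(a + m * (2 * π / n))) =
      Complex.exp (Complex.I * k * a) * (ζ ^ k) ^ m := fun m _ => by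
    rw [← Complex.exp_int_mul, ← Complex.exp_nat_mul, ← Complex.exp_add]
    congr 1
    push_cast
    ring
  rw [sum_congr rfl hterm, ← mul_sum, geom_sum_eq hne, hpow, sub_self, zero_div, mul_zero]

namespace IsTrigPoly

variable {N : ℕ} {q : ℝ → ℂ}

lemma periodic (hq : IsTrigPoly N q) : Function.Periodic q (2 * π) := by
  obtain ⟨c, hc⟩ := hq
  intro x
  rw [hc, hc]
  refine sum_congr rfl fun k _ => ?_
  congr 1
  exact Complex.exp_eq_exp_iff_exists_int.2 ⟨k, by push_cast; ring⟩

lemma integral_eq_sum_equispaced (hq : IsTrigPoly N q) (a : ℝ) :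
    ∫ t in (-π)..π, q t =
      ↑(2 * π / (2 * N + 1)) * ∑ m ∈ range (2 * N + 1), q (a + m * (2 * π / (2 * N + 1))) := by
  obtain ⟨c, hc⟩ := hq
  simp only [hc]
  rw [sum_comm, intervalIntegral.integral_finsetSum, mul_sum]
  · refine sum_congr rfl fun k hk => ?_
    rw [intervalIntegral.integral_const_mul, integral_exp_I_mul_intCast, ← mul_sum]
    split_ifs with hk0
    · subst hk0
      have hn : (2 * N + 1 : ℂ) ≠ 0 := by exact_mod_cast (2 * N).succ_ne_zero
      simp only [Complex.ofReal_div, Complex.ofReal_mul, Complex.ofReal_ofNat, Complex.ofReal_add,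
        Complex.ofReal_natCast, Complex.ofReal_one, Int.cast_zero, mul_zero, zero_mul,
        Complex.exp_zero, sum_const, card_range, nsmul_eq_mul, Nat.cast_add, Nat.cast_mul,
        Nat.cast_ofNat, Nat.cast_one, mul_one]
      field_simp
    · have hdvd : ¬((2 * N + 1 : ℕ) : ℤ) ∣ k := fun h => by
        rw [mem_Icc] at hk
        have := Int.le_of_dvd (abs_pos.2 hk0) ((dvd_abs _ _).2 h)
        have := abs_le.2 hk
        omega
      have hsum := sum_exp_I_mul_equispaced (2 * N).succ_ne_zero hdvd a
      push_cast at hsum ⊢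
      rw [hsum, mul_zero, mul_zero]
  · exact fun k _ => Continuous.intervalIntegrable (by fun_prop) _ _

lemma of_polynomial {P : Polynomial ℂ} (hP : P.natDegree ≤ 2 * N) :
    IsTrigPoly N fun t =>
      Complex.exp (-(t / 2) * Complex.I) ^ (2 * N) * P.eval (Complex.exp (t * Complex.I)) := by
  refine ⟨fun k => P.coeff (k + N).toNat, fun t => ?_⟩
  beta_reduce
  rw [Polynomial.eval_eq_sum_range' (Nat.lt_succ_of_le hP), sum_Icc_neg_natCast_eq_sum_range,
    mul_sum]
  refine sum_congr rfl fun i _ => ?_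
  rw [sub_add_cancel, Int.toNat_natCast, ← Complex.exp_nat_mul, ← Complex.exp_nat_mul,
    mul_left_comm, ← Complex.exp_add]
  congr 2
  push_cast
  ring

end IsTrigPoly

/-- The linear polynomial that, evaluated at `exp (i t)`, represents `sin ((t - y) / 2)` up to the
factor `exp (-i t / 2)`. -/
noncomputable def halfSinPoly (y : ℝ) : Polynomial ℂ :=
  Polynomial.C (-(Complex.exp (-(y / 2) * Complex.I) * Complex.I / 2)) * Polynomial.X +
    Polynomial.C (Complex.exp (y / 2 * Complex.I) * Complex.I / 2)

lemma exp_mul_eval_halfSinPoly (y t : ℝ) :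
    Complex.exp (-(t / 2) * Complex.I) * (halfSinPoly y).eval (Complex.exp (t * Complex.I)) =
      sin ((t - y) / 2) := by
  have hneg : Complex.exp (-((t - y) / 2) * Complex.I) =
      Complex.exp (-(t / 2) * Complex.I) * Complex.exp (y / 2 * Complex.I) := by
    rw [← Complex.exp_add]
    congr 1
    ring
  have hpos : Complex.exp ((t - y) / 2 * Complex.I) = Complex.exp (-(t / 2) * Complex.I) *
      Complex.exp (-(y / 2) * Complex.I) * Complex.exp (t * Complex.I) := by
    rw [← Complex.exp_add, ← Complex.exp_add]
    congr 1
    ring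
  rw [Complex.ofReal_sin, Complex.sin]
  push_cast
  rw [hneg, hpos, halfSinPoly, Polynomial.eval_add, Polynomial.eval_mul, Polynomial.eval_C,
    Polynomial.eval_C, Polynomial.eval_X]
  ring

lemma isTrigPoly_prod_sin {ι : Type*} {N : ℕ} (s : Finset ι) (hs : #s = 2 * N) (y : ι → ℝ) :
    IsTrigPoly N fun t => ∏ i ∈ s, (sin ((t - y i) / 2) : ℂ) := by
  have hdeg : (∏ i ∈ s, halfSinPoly (y i)).natDegree ≤ 2 * N := by
    refine (Polynomial.natDegree_prod_le _ _).trans ?_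
    refine (sum_le_card_nsmul _ _ 1 fun _ _ => Polynomial.natDegree_linear_le).trans_eq ?_
    rw [hs, nsmul_one, Nat.cast_id]
  convert IsTrigPoly.of_polynomial hdeg using 2 with t
  rw [Polynomial.eval_prod, ← hs, ← prod_const, ← prod_mul_distrib]
  exact prod_congr rfl fun i _ => (exp_mul_eval_halfSinPoly (y i) t).symm

lemma isTrigPoly_nodeProd (N : ℕ) (δ : ℕ → ℝ) (a : ℝ) :
    IsTrigPoly N fun t => (nodeProd (2 * N + 1) δ ((t - a) / (2 * π / (2 * N + 1))) : ℂ) := by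
  convert isTrigPoly_prod_sin (N := N) (Ico 1 (2 * N + 1)) (by simp)
    (fun i => a + (i + δ i) * (2 * π / (2 * N + 1))) using 2 with t
  rw [nodeProd, Complex.ofReal_prod]
  refine prod_congr rfl fun i _ => ?_
  rw [nodeSin]
  congr 2
  push_cast
  field_simp
  ring

-- Renumbering the nodes from the `j`-th one makes some of them cross `π`; periodicity puts them
-- back near consecutive equispaced points.
lemma ExactQuad.exists_shift {N : ℕ} {α : ℝ} {x w : ℤ → ℝ} (hw : ExactQuad N x w)
    (hx : PerturbedNodes N α x) (j : ℤ) :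
    ∃ δ : ℕ → ℝ, (∀ i, |δ i| ≤ α) ∧ ∀ q, IsTrigPoly N q →
      ∑ i ∈ range (2 * N + 1), (w ((j + i).bmod (2 * N + 1)) : ℂ) *
        q (j * (2 * π / (2 * N + 1)) + (i + δ i) * (2 * π / (2 * N + 1))) =
          ∫ t in (-π)..π, q t := by
  set h : ℝ := 2 * π / (2 * N + 1)
  have hh : 0 < h := by positivity
  refine ⟨fun i => x ((j + i).bmod (2 * N + 1)) / h - ((j + i).bmod (2 * N + 1) : ℤ),
    fun i => ?_, fun q hq => ?_⟩
  · have hxi := hx _ (bmod_mem_Icc N (j + i))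
    rwa [← mul_le_mul_iff_left₀ hh, ← abs_of_pos hh, ← abs_mul, sub_mul, abs_of_pos hh,
      div_mul_cancel₀ _ hh.ne']
  · rw [← hw q hq, sum_Icc_neg_natCast_eq_sum_bmod N j]
    refine sum_congr rfl fun i _ => ?_
    obtain ⟨z, hz⟩ := Int.dvd_bmod_sub_self (x := j + i) (m := 2 * N + 1)
    have hz' : (((j + i).bmod (2 * N + 1) : ℤ) : ℝ) - (j + i) = (2 * N + 1) * z := by
      exact_mod_cast hz
    have hhN : h * (2 * N + 1) = 2 * π := div_mul_cancel₀ _ (by positivity)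
    have hxh := div_mul_cancel₀ (x ((j + i).bmod (2 * N + 1))) hh.ne'
    rw [← hq.periodic.int_mul z (_ + _)]
    congr 2
    linear_combination hxh - h * hz' - z * hhN

lemma weight_nonneg_of_sum_abs_nodeProd_le {N : ℕ} {α a : ℝ} {δ W : ℕ → ℝ} (hα : α < 1 / 2)
    (hδ : ∀ i, |δ i| ≤ α)
    (hW : ∀ q, IsTrigPoly N q → ∑ i ∈ range (2 * N + 1),
      (W i : ℂ) * q (a + (i + δ i) * (2 * π / (2 * N + 1))) = ∫ t in (-π)..π, q t)
    (hsum : ∑ p ∈ Ico 1 (2 * N + 1), |nodeProd (2 * N + 1) δ p| ≤ nodeProd (2 * N + 1) δ 0) :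
    0 ≤ W 0 := by
  have hh : (0 : ℝ) < 2 * π / (2 * N + 1) := by positivity
  have hvanish : ∀ i ∈ Ico 1 (2 * N + 1), nodeProd (2 * N + 1) δ (i + δ i) = 0 := fun i hi =>
    prod_eq_zero hi (by simp [nodeSin])
  have hexact := hW _ (isTrigPoly_nodeProd N δ a)
  rw [(isTrigPoly_nodeProd N δ a).integral_eq_sum_equispaced a] at hexact
  simp only [add_sub_cancel_left, mul_div_cancel_right₀ _ hh.ne'] at hexact
  norm_cast at hexact
  have hW0 : W 0 * nodeProd (2 * N + 1) δ (δ 0) = 2 * π / (2 * N + 1) *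
      (nodeProd (2 * N + 1) δ 0 + ∑ p ∈ Ico 1 (2 * N + 1), nodeProd (2 * N + 1) δ p) := by
    rw [range_eq_Ico, sum_eq_sum_Ico_succ_bot (2 * N).succ_pos,
      sum_eq_sum_Ico_succ_bot (2 * N).succ_pos,
      sum_eq_zero fun i hi => by rw [hvanish i hi, mul_zero]] at hexact
    simpa only [Nat.cast_zero, zero_add, add_zero, Nat.cast_add, Nat.cast_mul, Nat.cast_ofNat,
      Nat.cast_one] using hexact
  have hrhs : 0 ≤ nodeProd (2 * N + 1) δ 0 +
      ∑ p ∈ Ico 1 (2 * N + 1), nodeProd (2 * N + 1) δ p := by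
    linarith [neg_le_of_abs_le (abs_sum_le_sum_abs (fun p : ℕ => nodeProd (2 * N + 1) δ p)
      (Ico 1 (2 * N + 1)))]
  refine nonneg_of_mul_nonneg_left ?_ (nodeProd_pos (N := N) hδ hα (hδ 0))
  rw [hW0]
  exact mul_nonneg hh.le hrhs

/-- an explicit size condition, involving the gamma function and the
Euler–Mascheroni constant, under which all quadrature weights at α-perturbed nodes are
nonnegative. -/
theorem weights_nonneg_explicit (α L : ℝ) (hα0 : 0 < α) (hα : α < 0.15) (hL : 0 < L)
    (hLcond : (α + L) * Real.exp (4*L) ≤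
      (Real.Gamma (1 + α))^2 / (π * Real.Gamma (1 - 2*α)))
    (N : ℕ) (hN : 2 ≤ N)
    (hNcond : Real.log ((N : ℝ) + 1 + α) + 1 / (2*(N : ℝ) - 1) ≤
      (1 - Real.eulerMascheroniConstant) + L / α)
    (x : ℤ → ℝ) (hx : PerturbedNodes N α x)
    (w : ℤ → ℝ) (hw : ExactQuad N x w) :
    ∀ j ∈ Finset.Icc (-(N:ℤ)) (N:ℤ), 0 ≤ w j := by
  intro j hj
  obtain ⟨δ, hδ, hexact⟩ := hw.exists_shift hx j
  have hN' : (2 : ℝ) ≤ N := by exact_mod_cast hN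
  have hlog : log ((N : ℝ) + 1) ≤ log (N + 1 + α) := log_le_log (by positivity) (by linarith)
  have hinv : 0 ≤ 1 / (2 * (N : ℝ) - 1) := one_div_nonneg.2 (by linarith)
  have hH : α * harmonic N ≤ α + L := mul_harmonic_le hα0 (by linarith)
  have hone := pi_mul_sum_shiftRatio_sq_le_one hα0.le hα.le hN hH hLcond
  have hdiag : 0 < nodeProd (2 * N + 1) δ 0 :=
    nodeProd_pos hδ (by linarith) (by rw [abs_zero]; exact hα0.le)
  have hsum := sum_abs_nodeProd_le (N := N) hδ (by linarith)
  rw [abs_of_pos hdiag] at hsum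
  have hW := weight_nonneg_of_sum_abs_nodeProd_le (by linarith) hδ hexact
    (hsum.trans (mul_le_of_le_one_left hdiag.le hone))
  rwa [Nat.cast_zero, add_zero, bmod_eq_self_of_mem_Icc hj] at hW
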